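/- arXiv:2411.09832 — 2 statements merged into one kernel-verified Lean document; each statement's English description precedes it below -/
import Mathlib

section
/- For an interval hypergraph 𝕀 on [n], the hypergraphic poset P_𝕀 is a distributive lattice (a lattice satisfying a ∨ (b ∧ c) = (a ∨ b) ∧ (a ∨ c) for all a, b, c) if and only if for all I, J ∈ 𝕀 such that I ⊈ J, J ⊈ I and I ∩ J ≠ ∅, the intersection I ∩ J belongs to 𝕀 and is initial or final in every K ∈ 𝕀 with I ∩ J ⊆ K (i.e., min(I ∩ J) = min(K) or max(I ∩ J) = max(K)). -/
namespace IHL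

/-- The hyperedges of a hypergraph, as a subtype. -/
abbrev Edge (𝕀 : Finset (Finset ℕ)) : Type := {H : Finset ℕ // H ∈ 𝕀}

/-- `ℋ` is a hypergraph on `[n] = {1,…,n}`: hyperedges are nonempty subsets of `[n]`
and all singletons belong to `ℋ`. -/
def IsHypergraph (n : ℕ) (ℋ : Finset (Finset ℕ)) : Prop :=
  (∀ H ∈ ℋ, H.Nonempty ∧ H ⊆ Finset.Icc 1 n) ∧
    ∀ i, 1 ≤ i → i ≤ n → ({i} : Finset ℕ) ∈ ℋ

/-- `𝕀` is an interval hypergraph on `[n]`: hyperedges are intervals `[a,b] ⊆ [n]`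
and all singletons belong to `𝕀`. -/
def IsIntervalHypergraph (n : ℕ) (𝕀 : Finset (Finset ℕ)) : Prop :=
  (∀ H ∈ 𝕀, ∃ a b, 1 ≤ a ∧ a ≤ b ∧ b ≤ n ∧ H = Finset.Icc a b) ∧
    ∀ i, 1 ≤ i → i ≤ n → ({i} : Finset ℕ) ∈ 𝕀

/-- An orientation assigns to each hyperedge one of its elements. -/
def IsOrientation (𝕀 : Finset (Finset ℕ)) (O : Edge 𝕀 → ℕ) : Prop :=
  ∀ H : Edge 𝕀, O H ∈ H.1

/-- Acyclicity: there is no cyclic sequence `H_0, …, H_k` with `k ≥ 2`, `H_k = H_0`, and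
`O (H (p+1)) ∈ H p \ {O (H p)}` for all `p < k`. -/
def IsAcyclic (𝕀 : Finset (Finset ℕ)) (O : Edge 𝕀 → ℕ) : Prop :=
  ¬∃ (k : ℕ) (H : ℕ → Edge 𝕀), 2 ≤ k ∧ H k = H 0 ∧
    ∀ p < k, O (H (p + 1)) ∈ (H p).1 ∧ O (H (p + 1)) ≠ O (H p)

/-- An acyclic orientation, i.e. an element of the hypergraphic poset. -/
def AcycOr (𝕀 : Finset (Finset ℕ)) (O : Edge 𝕀 → ℕ) : Prop :=
  IsOrientation 𝕀 O ∧ IsAcyclic 𝕀 O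

/-- Increasing flip from `O` to `O'` flipping `i` to `j`. -/
def IsIncFlip (n : ℕ) (𝕀 : Finset (Finset ℕ)) (i j : ℕ) (O O' : Edge 𝕀 → ℕ) : Prop :=
  O ≠ O' ∧ 1 ≤ i ∧ i < j ∧ j ≤ n ∧
    ∀ H : Edge 𝕀,
      (O H ≠ O' H → O H = i ∧ O' H = j) ∧
      (i ∈ H.1 → j ∈ H.1 → (O H = i ↔ O' H = j))

/-- One increasing flip step between acyclic orientations. -/
def FlipStep (n : ℕ) (𝕀 : Finset (Finset ℕ)) (O O' : Edge 𝕀 → ℕ) : Prop :=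
  AcycOr 𝕀 O ∧ AcycOr 𝕀 O' ∧ ∃ i j, IsIncFlip n 𝕀 i j O O'

/-- The order of the hypergraphic poset `P_𝕀`: reflexive-transitive closure of
the increasing flip relation on acyclic orientations. -/
def leP (n : ℕ) (𝕀 : Finset (Finset ℕ)) : (Edge 𝕀 → ℕ) → (Edge 𝕀 → ℕ) → Prop :=
  Relation.ReflTransGen (FlipStep n 𝕀)

/-- Strict order of the hypergraphic poset. -/
def ltP (n : ℕ) (𝕀 : Finset (Finset ℕ)) (A B : Edge 𝕀 → ℕ) : Prop :=
  leP n 𝕀 A B ∧ A ≠ B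

/-- `B` covers `A` in `P_𝕀`. -/
def CoversP (n : ℕ) (𝕀 : Finset (Finset ℕ)) (A B : Edge 𝕀 → ℕ) : Prop :=
  ltP n 𝕀 A B ∧ ¬∃ C, AcycOr 𝕀 C ∧ ltP n 𝕀 A C ∧ ltP n 𝕀 C B

/-- `𝕀` is closed under intersection. -/
def ClosedUnderIntersection (𝕀 : Finset (Finset ℕ)) : Prop :=
  ∀ I ∈ 𝕀, ∀ J ∈ 𝕀, (I ∩ J).Nonempty → I ∩ J ∈ 𝕀

/-- `π` is a permutation of `[n]` (it fixes everything outside `[1,n]`). -/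
def IsPermOn (n : ℕ) (π : Equiv.Perm ℕ) : Prop :=
  ∀ x, x ∉ Finset.Icc 1 n → π x = x

/-- The surjection `Or` from permutations to acyclic orientations:
`Or_π (H) = π (min {p : π p ∈ H})`. -/
noncomputable def orMap (𝕀 : Finset (Finset ℕ)) (π : Equiv.Perm ℕ) : Edge 𝕀 → ℕ :=
  fun H => π (sInf {p | π p ∈ H.1})

/-- The weak order on permutations of `[n]`, via inclusion of inversion sets. -/
def weakLe (n : ℕ) (σ τ : Equiv.Perm ℕ) : Prop :=
  ∀ a b, 1 ≤ a → a < b → b ≤ n → σ.symm b < σ.symm a → τ.symm b < τ.symm a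

/-- `π` contains the pattern 231. -/
def Contains231 (n : ℕ) (π : Equiv.Perm ℕ) : Prop :=
  ∃ p q r, 1 ≤ p ∧ p < q ∧ q < r ∧ r ≤ n ∧ π r < π p ∧ π p < π q

/-- `π` contains the pattern 213. -/
def Contains213 (n : ℕ) (π : Equiv.Perm ℕ) : Prop :=
  ∃ p q r, 1 ≤ p ∧ p < q ∧ q < r ∧ r ≤ n ∧ π q < π p ∧ π p < π r

/-- The partial order `≺_A`: transitive closure of `A H ≺ h` for `h ∈ H \ {A H}`. -/
def prec (𝕀 : Finset (Finset ℕ)) (A : Edge 𝕀 → ℕ) : ℕ → ℕ → Prop :=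
  Relation.TransGen fun a b => ∃ H : Edge 𝕀, A H = a ∧ b ∈ H.1 ∧ b ≠ a

/-- The distributivity condition on interval hypergraphs: for all `I, J ∈ 𝕀` with
`I ⊈ J`, `J ⊈ I` and `I ∩ J ≠ ∅`, the intersection `I ∩ J` is in `𝕀` and is initial
or final in any `K ∈ 𝕀` containing it. -/
def IsDistribHG (𝕀 : Finset (Finset ℕ)) : Prop :=
  ∀ I ∈ 𝕀, ∀ J ∈ 𝕀, ¬I ⊆ J → ¬J ⊆ I → (I ∩ J).Nonempty →
    (I ∩ J ∈ 𝕀 ∧ ∀ K ∈ 𝕀, I ∩ J ⊆ K → ((I ∩ J).min = K.min ∨ (I ∩ J).max = K.max))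

/-- `j ∈ 𝒥_𝕀 = ⋃_{I ∈ 𝕀} (I \ {min I})`. -/
def InJI (𝕀 : Finset (Finset ℕ)) (j : ℕ) : Prop :=
  ∃ I ∈ 𝕀, j ∈ I ∧ ∃ y ∈ I, y < j

/-- `Jj` is the interval `J_j = ⋂ {I ∈ 𝕀 : j ∈ I \ {min I}}`. -/
def IsJj (𝕀 : Finset (Finset ℕ)) (j : ℕ) (Jj : Finset ℕ) : Prop :=
  ∀ x, x ∈ Jj ↔ ∀ I ∈ 𝕀, j ∈ I → (∃ y ∈ I, y < j) → x ∈ I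

/-- `Aj` is the orientation `A_j` (where `μj = min J_j`):
`A_j (J) = j` if `j ∈ J` and `min J = μ_j`, and `A_j (J) = min J` otherwise. -/
def IsAj (𝕀 : Finset (Finset ℕ)) (j μj : ℕ) (Aj : Edge 𝕀 → ℕ) : Prop :=
  ∀ J : Edge 𝕀,
    (j ∈ J.1 ∧ IsLeast (J.1 : Set ℕ) μj → Aj J = j) ∧
    (¬(j ∈ J.1 ∧ IsLeast (J.1 : Set ℕ) μj) → IsLeast (J.1 : Set ℕ) (Aj J))

/-- `Jij` is the interval `J_{ij} = ⋂ {I ∈ 𝕀 : {i,j} ⊆ I}`. -/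
def IsJij (𝕀 : Finset (Finset ℕ)) (i j : ℕ) (Jij : Finset ℕ) : Prop :=
  ∀ x, x ∈ Jij ↔ ∀ I ∈ 𝕀, i ∈ I → j ∈ I → x ∈ I

/-- `(i,j) ∈ ℐ𝒥_𝕀`, where `μij = min J_{ij}`: both lie in a common hyperedge and
`i = max ([μ_{ij}, j) \ ⋃ {J \ {min J} : J ∈ 𝕀, J ⊆ [μ_{ij}, j)})`. -/
def InIJ (n : ℕ) (𝕀 : Finset (Finset ℕ)) (i j μij : ℕ) : Prop :=
  1 ≤ i ∧ i < j ∧ j ≤ n ∧ (∃ I ∈ 𝕀, i ∈ I ∧ j ∈ I) ∧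
    IsGreatest {m | μij ≤ m ∧ m < j ∧
      ∀ J ∈ 𝕀, (∀ x ∈ J, μij ≤ x ∧ x < j) → m ∈ J → ∀ y ∈ J, m ≤ y} i

/-- `Aij` is the orientation `A_{ij}` (where `μij = min J_{ij}`):
`A_{ij} (J) = j` if `j ∈ J` and `min J ≥ μ_{ij}`, and `A_{ij} (J) = min J` otherwise. -/
def IsAij (𝕀 : Finset (Finset ℕ)) (j μij : ℕ) (Aij : Edge 𝕀 → ℕ) : Prop :=
  ∀ J : Edge 𝕀,
    (j ∈ J.1 ∧ (∀ x ∈ J.1, μij ≤ x) → Aij J = j) ∧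
    (¬(j ∈ J.1 ∧ (∀ x ∈ J.1, μij ≤ x)) → IsLeast (J.1 : Set ℕ) (Aij J))

/-- The reversal `x ↦ n - x + 1` on `[n]`. -/
def revPt (n x : ℕ) : ℕ := n - x + 1

/-- The reversed hypergraph `ℋ↔`. -/
def revHG (n : ℕ) (ℋ : Finset (Finset ℕ)) : Finset (Finset ℕ) :=
  ℋ.image fun H => H.image (revPt n)

/-! ### Acyclicity and nested consistency -/

def Nest (𝕀 : Finset (Finset ℕ)) (O : Edge 𝕀 → ℕ) : Prop :=
  ∀ K L : Edge 𝕀, K.1 ⊆ L.1 → O L ∈ K.1 → O K = O L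

def Lam (𝕀 : Finset (Finset ℕ)) : Prop :=
  ∀ H ∈ 𝕀, ∀ K ∈ 𝕀, ∀ L ∈ 𝕀, H ⊆ L → K ⊆ L → (H ∩ K).Nonempty → H ⊆ K ∨ K ⊆ H

theorem no_two_cycle {𝕀 : Finset (Finset ℕ)} {O : Edge 𝕀 → ℕ} (h : IsAcyclic 𝕀 O)
    (K L : Edge 𝕀) (h1 : O L ∈ K.1) (h2 : O K ∈ L.1) : O K = O L := by
  by_contra hne
  apply h
  refine ⟨2, fun p => if p = 1 then K else L, le_rfl, by simp, ?_⟩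
  intro p hp
  interval_cases p
  · simp [h2, hne]
  · simp [h1, Ne.symm hne]

theorem nest_of_acyc {𝕀 : Finset (Finset ℕ)} {O : Edge 𝕀 → ℕ} (h : AcycOr 𝕀 O) :
    Nest 𝕀 O := by
  intro K L hKL hL
  exact no_two_cycle h.2 K L hL (hKL (h.1 K))

theorem icc_min {a b : ℕ} (h : a ≤ b) : (Finset.Icc a b).min = (a : WithTop ℕ) := by
  apply le_antisymm
  · exact Finset.min_le (by simp [h])
  · apply Finset.le_min
    intro x hx
    simp at hx
    exact WithTop.coe_le_coe.2 hx.1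

theorem icc_max {a b : ℕ} (h : a ≤ b) : (Finset.Icc a b).max = (b : WithBot ℕ) := by
  apply le_antisymm
  · apply Finset.max_le
    intro x hx
    simp at hx
    exact WithBot.coe_le_coe.2 hx.2
  · exact Finset.le_max (by simp [h])

theorem icc_inter (a b c d : ℕ) :
    Finset.Icc a b ∩ Finset.Icc c d = Finset.Icc (max a c) (min b d) := by
  ext x; simp; omega

theorem lam_of_distrib {n : ℕ} {𝕀 : Finset (Finset ℕ)} (h𝕀 : IsIntervalHypergraph n 𝕀)
    (hd : IsDistribHG 𝕀) : Lam 𝕀 := by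
  intro H hH K hK L hL hHL hKL hne
  by_contra hcon
  push Not at hcon
  have := (hd H hH K hK hcon.1 hcon.2 hne).2 L hL (Finset.inter_subset_left.trans hHL)
  obtain ⟨a, b, -, hab, -, rfl⟩ := h𝕀.1 H hH
  obtain ⟨c, d, -, hcd, -, rfl⟩ := h𝕀.1 K hK
  obtain ⟨p, q, -, hpq, -, rfl⟩ := h𝕀.1 L hL
  rw [icc_inter] at this hne
  simp only [Finset.nonempty_Icc] at hne
  rw [icc_min hne, icc_max hne, icc_min hpq, icc_max hpq] at this
  rw [Finset.Icc_subset_Icc_iff (by assumption)] at *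
  norm_cast at this
  grind

theorem closed_of_distrib {𝕀 : Finset (Finset ℕ)} 
    (hd : IsDistribHG 𝕀) : ClosedUnderIntersection 𝕀 := by
  intro I hI J hJ hne
  by_cases h1 : I ⊆ J
  · rwa [Finset.inter_eq_left.2 h1]
  by_cases h2 : J ⊆ I
  · rwa [Finset.inter_eq_right.2 h2]
  exact (hd I hI J hJ h1 h2 hne).1

/-- one local reduction: at a local max of a cycle there is a shortcut -/
theorem shortcut {n : ℕ} {𝕀 : Finset (Finset ℕ)} (h𝕀 : IsIntervalHypergraph n 𝕀)
    (hc : ClosedUnderIntersection 𝕀) {O : Edge 𝕀 → ℕ} (ho : IsOrientation 𝕀 O)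
    (hN : Nest 𝕀 O) (K H : Edge 𝕀) (z : ℕ) (h1 : O H ∈ K.1) (h1' : O K < O H)
    (h2 : z ∈ H.1) (h2' : z < O H) : z ∈ K.1 ∧ z ≠ O K := by
  have hM : K.1 ∩ H.1 ∈ 𝕀 := hc _ K.2 _ H.2 ⟨O H, by simp [h1, ho H]⟩
  have hM1 : O ⟨_, hM⟩ = O H :=
    hN ⟨_, hM⟩ H Finset.inter_subset_right (by simp [h1, ho H])
  have hK : O K ∉ H.1 := by
    intro hh
    have := hN ⟨_, hM⟩ K Finset.inter_subset_left (by simp [hh, ho K])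
    omega
  have hoK := ho K
  have hoH := ho H
  obtain ⟨a, b, -, hab, -, e1⟩ := h𝕀.1 K.1 K.2
  obtain ⟨c, d, -, hcd, -, e2⟩ := h𝕀.1 H.1 H.2
  rw [e1] at h1 hoK ⊢
  rw [e2] at h2 hK hoH
  simp only [Finset.mem_Icc] at *
  omega

theorem acyc_of_nest {n : ℕ} {𝕀 : Finset (Finset ℕ)} (h𝕀 : IsIntervalHypergraph n 𝕀)
    (hc : ClosedUnderIntersection 𝕀) {O : Edge 𝕀 → ℕ} (ho : IsOrientation 𝕀 O)
    (hN : Nest 𝕀 O) : AcycOr 𝕀 O := by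
  refine ⟨ho, ?_⟩
  rintro ⟨k, hk⟩
  induction k using Nat.strong_induction_on with
  | _ k ih =>
  obtain ⟨H, hk2, hcyc, hs⟩ := hk
  -- periodic version
  have hper : ∀ p, O (H ((p + 1) % k)) ∈ (H (p % k)).1 ∧ O (H ((p + 1) % k)) ≠ O (H (p % k)) := by
    intro p
    have hlt : p % k < k := Nat.mod_lt _ (by omega)
    have := hs (p % k) hlt
    have e : H ((p + 1) % k) = H (p % k + 1) := by
      by_cases hh : p % k + 1 = k
      · rw [Nat.add_mod, Nat.mod_eq_of_lt (show 1 < k by omega), hh, Nat.mod_self, hcyc]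
      · rw [Nat.add_mod, Nat.mod_eq_of_lt (show 1 < k by omega), Nat.mod_eq_of_lt (by omega)]
    rw [e]; exact this
  obtain ⟨m, hm, hmax⟩ := Finset.exists_max_image (Finset.range k) (fun p => O (H p))
    ⟨0, by simp; omega⟩
  simp only [Finset.mem_range] at hm hmax
  have hmax' : ∀ p, O (H (p % k)) ≤ O (H m) := fun p => hmax _ (Nat.mod_lt _ (by omega))
  -- rotated cycle : G p = H ((p + m + k - 1) % k)
  set G : ℕ → Edge 𝕀 := fun p => H ((p + (m + k - 1)) % k) with hG
  have hGs : ∀ p, O (G (p + 1)) ∈ (G p).1 ∧ O (G (p + 1)) ≠ O (G p) := by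
    intro p
    have := hper (p + (m + k - 1))
    simp only [hG]
    rw [show p + 1 + (m + k - 1) = p + (m + k - 1) + 1 by omega]
    exact this
  have hGk : G k = G 0 := by simp [hG]
  have hG1 : G 1 = H m := by
    simp only [hG]
    rw [show 1 + (m + k - 1) = m + k by omega, Nat.add_mod_right, Nat.mod_eq_of_lt hm]
  have hGm : ∀ p, O (G p) ≤ O (G 1) := by intro p; rw [hG1]; exact hmax' _
  have s0 := hGs 0
  have s1 := hGs 1
  simp only [zero_add] at s0
  norm_num at s1
  have l0 : O (G 0) < O (G 1) := lt_of_le_of_ne (hGm 0) (Ne.symm s0.2)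
  have l2 : O (G 2) < O (G 1) := lt_of_le_of_ne (hGm 2) s1.2
  have sc := shortcut h𝕀 hc ho hN (G 0) (G 1) (O (G 2)) s0.1 l0 s1.1 l2
  have hk3 : 3 ≤ k := by
    by_contra hlt
    have : k = 2 := by omega
    subst this
    exact sc.2 (by rw [hGk])
  refine ih (k - 1) (by omega) ⟨fun q => if q = 0 then G 0 else G (q + 1), by omega, ?_, ?_⟩
  · have : k - 1 ≠ 0 := by omega
    simp only [this, if_false, if_true]
    rw [show k - 1 + 1 = k by omega, hGk]
  · intro p hp
    by_cases hp0 : p = 0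
    · subst hp0; simpa using sc
    · simpa [hp0] using hGs (p + 1)

/-! ### The blocks of a hyperedge -/

def Rel (𝕀 : Finset (Finset ℕ)) (H : Finset ℕ) (x y : ℕ) : Prop :=
  x = y ∨ ∃ K ∈ 𝕀, K ⊂ H ∧ x ∈ K ∧ y ∈ K

theorem Rel.symm {𝕀 : Finset (Finset ℕ)} {H : Finset ℕ} {x y : ℕ} (h : Rel 𝕀 H x y) :
    Rel 𝕀 H y x := by
  rcases h with h | ⟨K, a, b, c, d⟩
  · exact Or.inl h.symm
  · exact Or.inr ⟨K, a, b, d, c⟩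

theorem Rel.trans {𝕀 : Finset (Finset ℕ)} (hl : Lam 𝕀) {H : Finset ℕ} (hH : H ∈ 𝕀) {x y z : ℕ}
    (h : Rel 𝕀 H x y) (h' : Rel 𝕀 H y z) : Rel 𝕀 H x z := by
  rcases h with rfl | ⟨K, a, b, c, d⟩
  · exact h'
  rcases h' with rfl | ⟨K', a', b', c', d'⟩
  · exact Or.inr ⟨K, a, b, c, d⟩
  rcases hl K a K' a' H hH b.1 b'.1 ⟨y, by simp [d, c']⟩ with h | h
  · exact Or.inr ⟨K', a', b', h c, d'⟩
  · exact Or.inr ⟨K, a, b, c, h d'⟩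

open Classical in
noncomputable def ee (𝕀 : Finset (Finset ℕ)) (H : Finset ℕ) (x : ℕ) : ℕ :=
  Nat.find (p := fun y => Rel 𝕀 H x y) ⟨x, Or.inl rfl⟩

theorem ee_rel (𝕀 : Finset (Finset ℕ)) (H : Finset ℕ) (x : ℕ) : Rel 𝕀 H x (ee 𝕀 H x) := by
  classical
  exact Nat.find_spec (p := fun y => Rel 𝕀 H x y) ⟨x, Or.inl rfl⟩

theorem ee_le {𝕀 : Finset (Finset ℕ)} {H : Finset ℕ} {x y : ℕ} (h : Rel 𝕀 H x y) :
    ee 𝕀 H x ≤ y := by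
  classical
  exact Nat.find_min' (p := fun y => Rel 𝕀 H x y) ⟨x, Or.inl rfl⟩ h

theorem ee_eq {𝕀 : Finset (Finset ℕ)} (hl : Lam 𝕀) {H : Finset ℕ} (hH : H ∈ 𝕀) {x y : ℕ} :
    ee 𝕀 H x = ee 𝕀 H y ↔ Rel 𝕀 H x y := by
  constructor
  · intro h
    have := ee_rel 𝕀 H x
    rw [h] at this
    exact this.trans hl hH (ee_rel 𝕀 H y).symm
  · intro h
    exact le_antisymm (ee_le (h.trans hl hH (ee_rel 𝕀 H y)))
      (ee_le (h.symm.trans hl hH (ee_rel 𝕀 H x)))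

theorem ee_mem {𝕀 : Finset (Finset ℕ)} {H : Finset ℕ} {x : ℕ} (hx : x ∈ H) :
    ee 𝕀 H x ∈ H := by
  rcases ee_rel 𝕀 H x with h | ⟨K, a, b, c, d⟩
  · rwa [← h]
  · exact b.1 d

theorem ee_idem {𝕀 : Finset (Finset ℕ)} (hl : Lam 𝕀) {H : Finset ℕ} (hH : H ∈ 𝕀) (x : ℕ) :
    ee 𝕀 H (ee 𝕀 H x) = ee 𝕀 H x := (ee_eq hl hH).2 (ee_rel 𝕀 H x).symm

theorem ee_mono {n : ℕ} {𝕀 : Finset (Finset ℕ)} (h𝕀 : IsIntervalHypergraph n 𝕀)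
    {H : Finset ℕ} {x y : ℕ} (hxy : x ≤ y) :
    ee 𝕀 H x ≤ ee 𝕀 H y := by
  by_contra hlt
  push Not at hlt
  have hx : ee 𝕀 H x ≤ x := ee_le (Or.inl rfl)
  rcases ee_rel 𝕀 H y with h | ⟨K, a, b, c, d⟩
  · omega
  · obtain ⟨p, q, -, -, -, rfl⟩ := h𝕀.1 K a
    have : Rel 𝕀 H x (ee 𝕀 H y) := Or.inr ⟨_, a, b, by simp at *; omega, d⟩
    have := ee_le this
    omega

theorem exists_block {n : ℕ} {𝕀 : Finset (Finset ℕ)} (h𝕀 : IsIntervalHypergraph n 𝕀)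
    (hl : Lam 𝕀) {H : Finset ℕ} (hH : H ∈ 𝕀) {x : ℕ} (hx : x ∈ H) (hne : H ≠ {x}) :
    ∃ D ∈ 𝕀, D ⊂ H ∧ x ∈ D ∧ ∀ K ∈ 𝕀, K ⊂ H → x ∈ K → K ⊆ D := by
  classical
  have hs : ({x} : Finset ℕ) ∈ 𝕀 := by
    obtain ⟨p, q, h1, h2, h3, rfl⟩ := h𝕀.1 H hH
    simp at hx
    exact h𝕀.2 x (by omega) (by omega)
  obtain ⟨D, hD, hm⟩ := Finset.exists_max_image (𝕀.filter (fun K => K ⊂ H ∧ x ∈ K))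
    Finset.card ⟨{x}, by
      simp only [Finset.mem_filter]
      exact ⟨hs, Finset.ssubset_iff_subset_ne.2 ⟨by simpa using hx, Ne.symm hne⟩, by simp⟩⟩
  simp only [Finset.mem_filter] at hD hm
  refine ⟨D, hD.1, hD.2.1, hD.2.2, ?_⟩
  intro K hK hKH hxK
  rcases hl K hK D hD.1 H hH hKH.1 hD.2.1.1 ⟨x, by simp [hxK, hD.2.2]⟩ with h | h
  · exact h
  · have := Finset.eq_of_subset_of_card_le h (hm K ⟨hK, hKH, hxK⟩)
    rw [this]

/-! ### Decoding -/

noncomputable def dec {𝕀 : Finset (Finset ℕ)} (f : Edge 𝕀 → ℕ) (d : Edge 𝕀 → Edge 𝕀)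
    (H : Edge 𝕀) : ℕ :=
  open Classical in
  if h : (d H).1 ⊂ H.1 then dec f d (d H) else f H
termination_by H.1.card
decreasing_by exact Finset.card_lt_card h

theorem exists_dec {n : ℕ} {𝕀 : Finset (Finset ℕ)} (h𝕀 : IsIntervalHypergraph n 𝕀)
    (hl : Lam 𝕀) (hc : ClosedUnderIntersection 𝕀) (f : Edge 𝕀 → ℕ) (hf : ∀ H, f H ∈ H.1) :
    ∃ O, AcycOr 𝕀 O ∧ ∀ H : Edge 𝕀, Rel 𝕀 H.1 (O H) (f H) := by
  have key : ∀ H : Edge 𝕀, ∃ D : Edge 𝕀, (H.1 = {f H} ∧ D = H) ∨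
      (D.1 ⊂ H.1 ∧ f H ∈ D.1 ∧ ∀ K ∈ 𝕀, K ⊂ H.1 → f H ∈ K → K ⊆ D.1) := by
    intro H
    by_cases h : H.1 = {f H}
    · exact ⟨H, Or.inl ⟨h, rfl⟩⟩
    · obtain ⟨D, h1, h2⟩ := exists_block h𝕀 hl H.2 (hf H) h
      exact ⟨⟨D, h1⟩, Or.inr h2⟩
  choose d hd using key
  have ho : ∀ H, dec f d H ∈ H.1 ∧ ((d H).1 ⊂ H.1 → dec f d H ∈ (d H).1) := by
    intro H
    induction hcard : H.1.card using Nat.strong_induction_on generalizing H with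
    | _ N ih =>
    rw [dec]
    split_ifs with h
    · have := (ih _ (by rw [← hcard]; exact Finset.card_lt_card h) (d H) rfl).1
      exact ⟨h.1 this, fun _ => this⟩
    · exact ⟨hf H, fun h' => absurd h' h⟩
  refine ⟨dec f d, acyc_of_nest h𝕀 hc (fun H => (ho H).1) ?_, ?_⟩
  · intro K L
    induction hcard : L.1.card using Nat.strong_induction_on generalizing L with
    | _ N ih =>
    intro hKL hL
    by_cases hKe : K = L
    · rw [hKe]
    have hss : K.1 ⊂ L.1 := Finset.ssubset_iff_subset_ne.2 ⟨hKL, fun h => hKe (Subtype.ext h)⟩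
    rcases hd L with ⟨h1, h2⟩ | ⟨h1, h2, h3⟩
    · exfalso
      rw [h1, Finset.ssubset_singleton_iff] at hss
      rw [hss] at hL
      simp at hL
    · have hLe : dec f d L = dec f d (d L) := by
        rw [dec]; simp [h1]
      have hK : K.1 ⊆ (d L).1 := by
        rcases hl K.1 K.2 (d L).1 (d L).2 L.1 L.2 hKL h1.1
          ⟨dec f d L, by simp [hL, (ho L).2 h1]⟩ with h | h
        · exact h
        · exact h3 K.1 K.2 hss (h h2)
      rw [hLe]
      exact ih _ (by rw [← hcard]; exact Finset.card_lt_card h1) (d L) rfl hK (by rwa [← hLe])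
  · intro H
    rcases hd H with ⟨h1, h2⟩ | ⟨h1, h2, h3⟩
    · have := (ho H).1
      rw [h1] at this
      exact Or.inl (by simpa using this)
    · exact Or.inr ⟨_, (d H).2, h1, (ho H).2 h1, h2⟩

/-! ### Order -/

theorem flip_le {n : ℕ} {𝕀 : Finset (Finset ℕ)} {A B : Edge 𝕀 → ℕ} (h : FlipStep n 𝕀 A B)
    (H : Edge 𝕀) : A H ≤ B H := by
  obtain ⟨-, -, i, j, -, -, h1, -, h2⟩ := h
  by_cases hh : A H = B H
  · exact hh.le
  · have := (h2 H).1 hh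
    omega

theorem leP_le {n : ℕ} {𝕀 : Finset (Finset ℕ)} {A B : Edge 𝕀 → ℕ} (h : leP n 𝕀 A B)
    (H : Edge 𝕀) : A H ≤ B H := by
  induction h with
  | refl => exact le_rfl
  | tail _ h ih => exact ih.trans (flip_le h H)

theorem ee_inj {𝕀 : Finset (Finset ℕ)} 
    (hl : Lam 𝕀) {A B : Edge 𝕀 → ℕ} (hA : AcycOr 𝕀 A) (hB : AcycOr 𝕀 B)
    (h : ∀ H : Edge 𝕀, ee 𝕀 H.1 (A H) = ee 𝕀 H.1 (B H)) : A = B := by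
  funext H
  induction hcard : H.1.card using Nat.strong_induction_on generalizing H with
  | _ N ih =>
  rcases (ee_eq hl H.2).1 (h H) with h1 | ⟨K, a, b, c, d⟩
  · exact h1
  · rw [← nest_of_acyc hA ⟨K, a⟩ H b.1 c, ← nest_of_acyc hB ⟨K, a⟩ H b.1 d]
    exact ih _ (by rw [← hcard]; exact Finset.card_lt_card b) ⟨K, a⟩ rfl

theorem exists_flip {n : ℕ} {𝕀 : Finset (Finset ℕ)} (h𝕀 : IsIntervalHypergraph n 𝕀)
    (hl : Lam 𝕀) (hc : ClosedUnderIntersection 𝕀) {A : Edge 𝕀 → ℕ} (hA : AcycOr 𝕀 A)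
    (H : Edge 𝕀) (y : ℕ) (hy : y ∈ H.1) (hlt : ee 𝕀 H.1 (A H) < ee 𝕀 H.1 y) :
    ∃ A', FlipStep n 𝕀 A A' ∧ ee 𝕀 H.1 (A' H) = ee 𝕀 H.1 y ∧
      ∀ K : Edge 𝕀, K ≠ H → ee 𝕀 K.1 (A' K) = ee 𝕀 K.1 (A K) := by
  classical
  have hN := nest_of_acyc hA
  have hne : H.1 ≠ {y} := by
    intro hh
    have := hA.1 H
    rw [hh] at this
    simp at this
    rw [this] at hlt
    omega
  obtain ⟨D, hD, hDH, hyD, hmax⟩ := exists_block h𝕀 hl H.2 hy hne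
  set i := A H with hi
  set j := A ⟨D, hD⟩ with hj
  have hjD : j ∈ D := hA.1 ⟨D, hD⟩
  have hiH : i ∈ H.1 := hA.1 H
  have hjH : j ∈ H.1 := hDH.1 hjD
  have hjy : ee 𝕀 H.1 j = ee 𝕀 H.1 y := (ee_eq hl H.2).2 (Or.inr ⟨D, hD, hDH, hjD, hyD⟩)
  have hij : i < j := by
    by_contra hh
    push Not at hh
    have := ee_mono h𝕀 (H := H.1) hh
    omega
  have hnr : ¬ Rel 𝕀 H.1 i j := by
    intro hh
    have := (ee_eq hl H.2).2 hh
    omega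
  have hsup : ∀ K : Edge 𝕀, i ∈ K.1 → j ∈ K.1 → H.1 ⊆ K.1 := by
    intro K h1 h2
    by_contra hh
    have : H.1 ∩ K.1 ∈ 𝕀 := hc _ H.2 _ K.2 ⟨i, by simp [hiH, h1]⟩
    refine hnr (Or.inr ⟨_, this, ?_, by simp [hiH, h1], by simp [hjH, h2]⟩)
    refine Finset.ssubset_iff_subset_ne.2 ⟨Finset.inter_subset_left, fun h => hh ?_⟩
    rw [← h]; exact Finset.inter_subset_right
  set A' : Edge 𝕀 → ℕ := fun K => if H.1 ⊆ K.1 ∧ A K = i then j else A K with hA'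
  have hp : ∀ K : Edge 𝕀, H.1 ⊆ K.1 → A K = i → A' K = j := by
    intro K h1 h2; exact if_pos ⟨h1, h2⟩
  have hq : ∀ K : Edge 𝕀, ¬ (H.1 ⊆ K.1 ∧ A K = i) → A' K = A K := by
    intro K h1; simp only [hA', h1, if_false]
  have hA'H : A' H = j := hp H subset_rfl rfl
  have hor : IsOrientation 𝕀 A' := by
    intro K
    by_cases h : H.1 ⊆ K.1 ∧ A K = i
    · rw [hp K h.1 h.2]; exact h.1 hjH
    · rw [hq K h]; exact hA.1 K
  have hN' : Nest 𝕀 A' := by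
    intro K L hKL hLK
    by_cases h : H.1 ⊆ L.1 ∧ A L = i
    · rw [hp L h.1 h.2] at hLK ⊢
      by_cases hHK : H.1 ⊆ K.1
      · exact hp K hHK (by rw [← h.2]; exact hN K L hKL (by rw [h.2]; exact hHK hiH))
      · rw [hq K (fun h => hHK h.1)]
        have hKH : K.1 ⊂ H.1 := by
          rcases hl K.1 K.2 H.1 H.2 L.1 L.2 hKL h.1 ⟨j, by simp [hLK, hjH]⟩ with h | h
          · exact Finset.ssubset_iff_subset_ne.2 ⟨h, fun e => hHK (by rw [e])⟩
          · exact absurd h hHK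
        have hKD : K.1 ⊆ D := by
          rcases hl K.1 K.2 D hD H.1 H.2 hKH.1 hDH.1 ⟨j, by simp [hLK, hjD]⟩ with h | h
          · exact h
          · exact hmax K.1 K.2 hKH (h hyD)
        exact hN K ⟨D, hD⟩ hKD hLK
    · rw [hq L h] at hLK ⊢
      have hKL' := hN K L hKL hLK
      rw [hq K, hKL']
      rintro ⟨h1, h2⟩
      exact h ⟨h1.trans hKL, by rw [← hKL', h2]⟩
  have hAc : AcycOr 𝕀 A' := acyc_of_nest h𝕀 hc hor hN'
  have hrange : ∀ x ∈ H.1, 1 ≤ x ∧ x ≤ n := by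
    intro x hx
    obtain ⟨p, q, h1, h2, h3, e⟩ := h𝕀.1 H.1 H.2
    rw [e] at hx
    simp at hx
    omega
  refine ⟨A', ⟨hA, hAc, i, j, ?_, (hrange i hiH).1, hij, (hrange j hjH).2, ?_⟩, ?_, ?_⟩
  · intro h
    have := congrFun h H
    rw [hA'H] at this
    omega
  · intro K
    constructor
    · intro h
      by_cases h' : H.1 ⊆ K.1 ∧ A K = i
      · exact ⟨h'.2, hp K h'.1 h'.2⟩
      · exact absurd (hq K h').symm h
    · intro h1 h2
      have hHK := hsup K h1 h2
      constructor
      · exact hp K hHK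
      · intro h3
        by_contra h4
        rw [hq K (fun h => h4 h.2)] at h3
        have := hN H K hHK (by rw [h3]; exact hjH)
        omega
  · rw [hA'H, hjy]
  · intro K hK
    by_cases h : H.1 ⊆ K.1 ∧ A K = i
    · rw [hp K h.1 h.2, h.2]
      refine (ee_eq hl K.2).2 (Or.inr ⟨H.1, H.2, ?_, hjH, hiH⟩)
      exact Finset.ssubset_iff_subset_ne.2 ⟨h.1, fun e => hK (Subtype.ext e.symm)⟩
    · rw [hq K h]

theorem leP_iff {n : ℕ} {𝕀 : Finset (Finset ℕ)} (h𝕀 : IsIntervalHypergraph n 𝕀)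
    (hl : Lam 𝕀) (hc : ClosedUnderIntersection 𝕀) {A B : Edge 𝕀 → ℕ} (hA : AcycOr 𝕀 A)
    (hB : AcycOr 𝕀 B) :
    leP n 𝕀 A B ↔ ∀ H : Edge 𝕀, ee 𝕀 H.1 (A H) ≤ ee 𝕀 H.1 (B H) := by
  classical
  constructor
  · intro h H
    exact ee_mono h𝕀 (leP_le h H)
  · intro h
    induction hN : (Finset.univ.filter
      (fun H : Edge 𝕀 => ee 𝕀 H.1 (A H) ≠ ee 𝕀 H.1 (B H))).card
      using Nat.strong_induction_on generalizing A with
    | _ N ih =>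
    by_cases he : ∀ H : Edge 𝕀, ee 𝕀 H.1 (A H) = ee 𝕀 H.1 (B H)
    · rw [ee_inj hl hA hB he]
      exact Relation.ReflTransGen.refl
    push Not at he
    obtain ⟨H, hH⟩ := he
    obtain ⟨A', hf, h1, h2⟩ := exists_flip h𝕀 hl hc hA H (B H) (hB.1 H)
      (lt_of_le_of_ne (h H) hH)
    refine Relation.ReflTransGen.head hf (ih _ ?_ hf.2.1 ?_ rfl)
    · rw [← hN]
      apply Finset.card_lt_card
      refine Finset.ssubset_iff_of_subset ?_ |>.2 ⟨H, by simp [hH], by simp [h1]⟩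
      intro K hK
      simp only [Finset.mem_filter, Finset.mem_univ, true_and] at hK ⊢
      by_cases e : K = H
      · subst e; exact hH
      · rwa [h2 K e] at hK
    · intro K
      by_cases e : K = H
      · subst e; exact h1.le
      · rw [h2 K e]; exact h K

theorem exists_comb {n : ℕ} {𝕀 : Finset (Finset ℕ)} (h𝕀 : IsIntervalHypergraph n 𝕀)
    (hl : Lam 𝕀) (hc : ClosedUnderIntersection 𝕀) (g : ℕ → ℕ → ℕ)
    (hg : ∀ x y, g x y = x ∨ g x y = y) (A B : Edge 𝕀 → ℕ) :
    ∃ O, AcycOr 𝕀 A → AcycOr 𝕀 B → AcycOr 𝕀 O ∧ ∀ H : Edge 𝕀,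
      ee 𝕀 H.1 (O H) = g (ee 𝕀 H.1 (A H)) (ee 𝕀 H.1 (B H)) := by
  by_cases hA : AcycOr 𝕀 A
  swap
  · exact ⟨A, fun h => absurd h hA⟩
  by_cases hB : AcycOr 𝕀 B
  swap
  · exact ⟨A, fun _ h => absurd h hB⟩
  obtain ⟨O, h1, h2⟩ := exists_dec h𝕀 hl hc
    (fun H => g (ee 𝕀 H.1 (A H)) (ee 𝕀 H.1 (B H))) (by
      intro H
      rcases hg (ee 𝕀 H.1 (A H)) (ee 𝕀 H.1 (B H)) with h | h <;> simp only [h]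
      · exact ee_mem (hA.1 H)
      · exact ee_mem (hB.1 H))
  refine ⟨O, fun _ _ => ⟨h1, fun H => ?_⟩⟩
  rw [(ee_eq hl H.2).2 (h2 H)]
  rcases hg (ee 𝕀 H.1 (A H)) (ee 𝕀 H.1 (B H)) with h | h <;> simp only [h]
  · exact ee_idem hl H.2 _
  · exact ee_idem hl H.2 _

theorem backward (n : ℕ) (𝕀 : Finset (Finset ℕ))
    (h𝕀 : IsIntervalHypergraph n 𝕀) (hd : IsDistribHG 𝕀) :
    ∃ join meet : (Edge 𝕀 → ℕ) → (Edge 𝕀 → ℕ) → Edge 𝕀 → ℕ,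
      (∀ A B, AcycOr 𝕀 A → AcycOr 𝕀 B →
        (AcycOr 𝕀 (join A B) ∧ leP n 𝕀 A (join A B) ∧ leP n 𝕀 B (join A B) ∧
          ∀ D, AcycOr 𝕀 D → leP n 𝕀 A D → leP n 𝕀 B D → leP n 𝕀 (join A B) D) ∧
        (AcycOr 𝕀 (meet A B) ∧ leP n 𝕀 (meet A B) A ∧ leP n 𝕀 (meet A B) B ∧
          ∀ D, AcycOr 𝕀 D → leP n 𝕀 D A → leP n 𝕀 D B → leP n 𝕀 D (meet A B))) ∧
      ∀ A B C, AcycOr 𝕀 A → AcycOr 𝕀 B → AcycOr 𝕀 C →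
        join A (meet B C) = meet (join A B) (join A C) := by
  have hl := lam_of_distrib h𝕀 hd
  have hc := closed_of_distrib hd
  choose join hj using exists_comb h𝕀 hl hc max (fun x y => by omega)
  choose meet hm using exists_comb h𝕀 hl hc min (fun x y => by omega)
  refine ⟨join, meet, ?_, ?_⟩
  · intro A B hA hB
    obtain ⟨j1, j2⟩ := hj A B hA hB
    obtain ⟨m1, m2⟩ := hm A B hA hB
    refine ⟨⟨j1, ?_, ?_, ?_⟩, ⟨m1, ?_, ?_, ?_⟩⟩
    · rw [leP_iff h𝕀 hl hc hA j1]; intro H; rw [j2]; omega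
    · rw [leP_iff h𝕀 hl hc hB j1]; intro H; rw [j2]; omega
    · intro D hD h1 h2
      rw [leP_iff h𝕀 hl hc hA hD] at h1
      rw [leP_iff h𝕀 hl hc hB hD] at h2
      rw [leP_iff h𝕀 hl hc j1 hD]
      intro H; rw [j2]; exact max_le (h1 H) (h2 H)
    · rw [leP_iff h𝕀 hl hc m1 hA]; intro H; rw [m2]; omega
    · rw [leP_iff h𝕀 hl hc m1 hB]; intro H; rw [m2]; omega
    · intro D hD h1 h2
      rw [leP_iff h𝕀 hl hc hD hA] at h1
      rw [leP_iff h𝕀 hl hc hD hB] at h2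
      rw [leP_iff h𝕀 hl hc hD m1]
      intro H; rw [m2]; exact le_min (h1 H) (h2 H)
  · intro A B C hA hB hC
    obtain ⟨a1, a2⟩ := hm B C hB hC
    obtain ⟨b1, b2⟩ := hj A _ hA a1
    obtain ⟨c1, c2⟩ := hj A B hA hB
    obtain ⟨d1, d2⟩ := hj A C hA hC
    obtain ⟨e1, e2⟩ := hm _ _ c1 d1
    refine ee_inj hl b1 e1 (fun H => ?_)
    rw [b2, a2, e2, c2, d2]
    omega

/-! ### Orientations from lists -/

def fst : List ℕ → Finset ℕ → ℕ
  | [], _ => 0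
  | a :: l, H => if a ∈ H then a else fst l H

theorem fst_left {u v : List ℕ} {H : Finset ℕ} (h : ∃ x ∈ u, x ∈ H) :
    fst (u ++ v) H = fst u H := by
  induction u with
  | nil => simp at h
  | cons a u ih =>
    simp only [List.cons_append, fst]
    split_ifs with ha
    · rfl
    · apply ih
      obtain ⟨x, hx, hxH⟩ := h
      rcases List.mem_cons.1 hx with rfl | hx
      · exact absurd hxH ha
      · exact ⟨x, hx, hxH⟩

theorem fst_right {u v : List ℕ} {H : Finset ℕ} (h : ¬ ∃ x ∈ u, x ∈ H) :
    fst (u ++ v) H = fst v H := by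
  induction u with
  | nil => rfl
  | cons a u ih =>
    simp only [List.cons_append, fst]
    have ha : a ∉ H := fun h' => h ⟨a, by simp, h'⟩
    rw [if_neg ha]
    exact ih (fun ⟨x, hx, hxH⟩ => h ⟨x, by simp [hx], hxH⟩)

theorem fst_cons_mem {a : ℕ} {v : List ℕ} {H : Finset ℕ} (h : a ∈ H) : fst (a :: v) H = a := by
  simp [fst, h]

theorem fst_mem {l : List ℕ} {H : Finset ℕ} (h : ∃ x ∈ l, x ∈ H) :
    fst l H ∈ l ∧ fst l H ∈ H := by
  induction l with
  | nil => simp at h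
  | cons a l ih =>
    simp only [fst]
    split_ifs with ha
    · exact ⟨by simp, ha⟩
    · have := ih (by
        obtain ⟨x, hx, hxH⟩ := h
        rcases List.mem_cons.1 hx with rfl | hx
        · exact absurd hxH ha
        · exact ⟨x, hx, hxH⟩)
      exact ⟨by simp [this.1], this.2⟩

theorem fst_idx {l : List ℕ} {H : Finset ℕ} {y : ℕ} (hy : y ∈ H) (hl : y ∈ l)
    (hne : y ≠ fst l H) : l.idxOf (fst l H) < l.idxOf y := by
  induction l with
  | nil => simp at hl
  | cons a l ih =>
    simp only [fst] at hne ⊢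
    split_ifs at hne ⊢ with ha
    · rw [List.idxOf_cons_self, List.idxOf_cons_ne _ (Ne.symm hne)]
      omega
    · have hay : a ≠ y := fun h => ha (h ▸ hy)
      have hyl : y ∈ l := by
        rcases List.mem_cons.1 hl with h | h
        · exact absurd h.symm hay
        · exact h
      have hm : a ≠ fst l H := fun h => ha (h ▸ (fst_mem ⟨y, hyl, hy⟩).2)
      rw [List.idxOf_cons_ne _ hay, List.idxOf_cons_ne _ hm]
      have := ih hyl hne
      omega

def Good (n : ℕ) (l : List ℕ) : Prop := l.Nodup ∧ ∀ x, x ∈ l ↔ 1 ≤ x ∧ x ≤ n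

theorem Good.perm {n : ℕ} {l l' : List ℕ} (h : Good n l) (hp : l.Perm l') : Good n l' :=
  ⟨hp.nodup_iff.1 h.1, fun x => by rw [← hp.mem_iff]; exact h.2 x⟩

def orL (𝕀 : Finset (Finset ℕ)) (l : List ℕ) : Edge 𝕀 → ℕ := fun H => fst l H.1

theorem orL_acyc {n : ℕ} {𝕀 : Finset (Finset ℕ)} (h𝕀 : IsIntervalHypergraph n 𝕀)
    {l : List ℕ} (hg : Good n l) : AcycOr 𝕀 (orL 𝕀 l) := by
  have hmem : ∀ H : Edge 𝕀, ∀ x ∈ H.1, x ∈ l := by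
    intro H x hx
    obtain ⟨p, q, h1, h2, h3, e⟩ := h𝕀.1 H.1 H.2
    rw [e] at hx
    simp at hx
    exact (hg.2 x).2 (by omega)
  have ho : IsOrientation 𝕀 (orL 𝕀 l) := by
    intro H
    obtain ⟨p, q, h1, h2, h3, e⟩ := h𝕀.1 H.1 H.2
    have : p ∈ H.1 := by rw [e]; simp [h2]
    exact (fst_mem ⟨p, hmem H p this, this⟩).2
  refine ⟨ho, ?_⟩
  rintro ⟨k, H, hk, hcyc, hs⟩
  have : ∀ p ≤ k, l.idxOf (orL 𝕀 l (H 0)) + p ≤ l.idxOf (orL 𝕀 l (H p)) := by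
    intro p
    induction p with
    | zero => intro _; simp
    | succ p ih =>
      intro hp
      have h1 := ih (by omega)
      obtain ⟨h2, h3⟩ := hs p (by omega)
      have := fst_idx h2 (hmem _ _ h2) h3
      change l.idxOf (orL 𝕀 l (H p)) < _ at this
      omega
  have := this k le_rfl
  rw [hcyc] at this
  omega

theorem swap_adj {n : ℕ} {𝕀 : Finset (Finset ℕ)} (h𝕀 : IsIntervalHypergraph n 𝕀)
    {u v : List ℕ} {a b : ℕ} (hab : a < b) (hg : Good n (u ++ a :: b :: v)) :
    leP n 𝕀 (orL 𝕀 (u ++ a :: b :: v)) (orL 𝕀 (u ++ b :: a :: v)) := by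
  by_cases he : orL 𝕀 (u ++ a :: b :: v) = orL 𝕀 (u ++ b :: a :: v)
  · rw [he]; exact Relation.ReflTransGen.refl
  have hg' : Good n (u ++ b :: a :: v) := hg.perm (List.Perm.append_left u (List.Perm.swap b a v))
  have ha := (hg.2 a).1 (by simp)
  have hb := (hg.2 b).1 (by simp)
  have hau : a ∉ u := by
    have := hg.1; rw [List.nodup_append] at this
    intro h; exact this.2.2 a h a (by simp) rfl
  have hbu : b ∉ u := by
    have := hg.1; rw [List.nodup_append] at this
    intro h; exact this.2.2 b h b (by simp) rfl
  refine Relation.ReflTransGen.single ⟨orL_acyc h𝕀 hg, orL_acyc h𝕀 hg', a, b, he, ha.1, hab,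
    hb.2, ?_⟩
  intro H
  simp only [orL]
  by_cases hu : ∃ x ∈ u, x ∈ H.1
  · rw [fst_left hu, fst_left hu]
    have := (fst_mem hu).1
    refine ⟨fun h => absurd rfl h, fun _ _ => ⟨fun h => ?_, fun h => ?_⟩⟩
    · exact absurd (h ▸ this) hau
    · exact absurd (h ▸ this) hbu
  · rw [fst_right hu, fst_right hu]
    simp only [fst]
    by_cases h1 : a ∈ H.1 <;> by_cases h2 : b ∈ H.1 <;> simp [h1, h2]

theorem swap_one {n : ℕ} {𝕀 : Finset (Finset ℕ)} (h𝕀 : IsIntervalHypergraph n 𝕀)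
    (L : List ℕ) {b : ℕ} (hL : ∀ a ∈ L, a < b) (u v : List ℕ)
    (hg : Good n (u ++ L ++ b :: v)) :
    leP n 𝕀 (orL 𝕀 (u ++ L ++ b :: v)) (orL 𝕀 (u ++ b :: L ++ v)) := by
  induction L generalizing u with
  | nil => simp; exact Relation.ReflTransGen.refl
  | cons a L ih =>
    have h1 := ih (fun x hx => hL x (by simp [hx])) (u ++ [a]) (by simpa using hg)
    have hg2 : Good n (u ++ a :: b :: (L ++ v)) := by
      refine hg.perm ?_
      simp only [List.append_assoc, List.cons_append]
      refine List.Perm.append_left u (List.Perm.cons a ?_)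
      exact List.perm_middle
    have h2 := swap_adj h𝕀 (hL a (by simp)) hg2
    simp only [List.append_assoc, List.cons_append, List.nil_append] at h1 h2 ⊢
    exact h1.trans h2

theorem swap_block {n : ℕ} {𝕀 : Finset (Finset ℕ)} (h𝕀 : IsIntervalHypergraph n 𝕀)
    (L R : List ℕ) (hLR : ∀ a ∈ L, ∀ b ∈ R, a < b) (u v : List ℕ)
    (hg : Good n (u ++ (L ++ (R ++ v)))) :
    leP n 𝕀 (orL 𝕀 (u ++ (L ++ (R ++ v)))) (orL 𝕀 (u ++ (R ++ (L ++ v)))) := by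
  induction R generalizing u with
  | nil => simp; exact Relation.ReflTransGen.refl
  | cons b R ih =>
    have h1 := swap_one h𝕀 L (fun a ha => hLR a ha b (by simp)) u (R ++ v) (by simpa using hg)
    have hg2 : Good n ((u ++ [b]) ++ (L ++ (R ++ v))) := by
      refine hg.perm ?_
      simp only [List.append_assoc, List.cons_append, List.nil_append]
      exact List.Perm.append_left u List.perm_middle
    have h2 := ih (fun a ha x hx => hLR a ha x (by simp [hx])) (u ++ [b]) hg2
    simp only [List.append_assoc, List.cons_append, List.nil_append] at h1 h2 ⊢
    exact h1.trans h2

def IsLattice (n : ℕ) (𝕀 : Finset (Finset ℕ))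
    (join meet : (Edge 𝕀 → ℕ) → (Edge 𝕀 → ℕ) → Edge 𝕀 → ℕ) : Prop :=
  (∀ A B, AcycOr 𝕀 A → AcycOr 𝕀 B →
        (AcycOr 𝕀 (join A B) ∧ leP n 𝕀 A (join A B) ∧ leP n 𝕀 B (join A B) ∧
          ∀ D, AcycOr 𝕀 D → leP n 𝕀 A D → leP n 𝕀 B D → leP n 𝕀 (join A B) D) ∧
        (AcycOr 𝕀 (meet A B) ∧ leP n 𝕀 (meet A B) A ∧ leP n 𝕀 (meet A B) B ∧
          ∀ D, AcycOr 𝕀 D → leP n 𝕀 D A → leP n 𝕀 D B → leP n 𝕀 D (meet A B)))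

theorem inter_mem {n : ℕ} {𝕀 : Finset (Finset ℕ)} (h𝕀 : IsIntervalHypergraph n 𝕀)
    {join meet : (Edge 𝕀 → ℕ) → (Edge 𝕀 → ℕ) → Edge 𝕀 → ℕ} (hlat : IsLattice n 𝕀 join meet)
    {i j k l : ℕ} (hi : 1 ≤ i) (hij : i < j) (hjk : j ≤ k) (hkl : k < l) (hl : l ≤ n)
    (hI : Finset.Icc i k ∈ 𝕀) (hJ : Finset.Icc j l ∈ 𝕀) : Finset.Icc j k ∈ 𝕀 := by
  by_contra hM
  have hjk' : j < k := by
    rcases hjk.lt_or_eq with h | h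
    · exact h
    · subst h
      exact absurd (by simpa using h𝕀.2 j (by omega) (by omega)) hM
  obtain ⟨L, hL, hLn⟩ : ∃ L : List ℕ, (∀ x, x ∈ L ↔ 1 ≤ x ∧ x < j) ∧ L.Nodup :=
    ⟨(Finset.Ico 1 j).toList, by simp, Finset.nodup_toList _⟩
  obtain ⟨m, hm, hmn⟩ : ∃ L : List ℕ, (∀ x, x ∈ L ↔ j < x ∧ x < k) ∧ L.Nodup :=
    ⟨(Finset.Ioo j k).toList, by simp, Finset.nodup_toList _⟩
  obtain ⟨R, hR, hRn⟩ : ∃ L : List ℕ, (∀ x, x ∈ L ↔ k < x ∧ x ≤ n) ∧ L.Nodup :=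
    ⟨(Finset.Ioc k n).toList, by simp, Finset.nodup_toList _⟩
  have gA : Good n (L ++ ([k, j] ++ (m ++ R))) := by
    constructor
    · simp only [List.nodup_append, List.mem_append, hL, hm, hR, hLn, hmn, hRn, List.mem_cons,
        List.nodup_cons, List.not_mem_nil]
      simp
      refine ⟨⟨by omega, ?_, ?_, ?_⟩, ?_⟩ <;> intros <;> omega
    · intro x
      simp only [List.mem_append, hL, hm, hR, List.mem_cons, List.not_mem_nil, or_false]
      omega
  have gB : Good n ((j :: L) ++ ([k] ++ (m ++ R))) := gA.perm (by
    rw [List.perm_iff_count]; intro a; simp [List.count_cons]; omega)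
  have gC : Good n ([k, j] ++ (L ++ (m ++ R))) := gA.perm (by
    rw [List.perm_iff_count]; intro a; simp [List.count_cons]; omega)
  have gD : Good n (R ++ ([j] ++ (L ++ (k :: m)))) := gA.perm (by
    rw [List.perm_iff_count]; intro a; simp [List.count_cons]; omega)
  have gD' : Good n (R ++ (L ++ ([j] ++ (k :: m)))) := gA.perm (by
    rw [List.perm_iff_count]; intro a; simp [List.count_cons]; omega)
  have AC : leP n 𝕀 (orL 𝕀 (L ++ ([k, j] ++ (m ++ R)))) (orL 𝕀 ([k, j] ++ (L ++ (m ++ R)))) := by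
    refine swap_block h𝕀 L [k, j] ?_ [] (m ++ R) gA
    intro a ha b hb
    simp [hL] at ha hb
    omega
  have BC : leP n 𝕀 (orL 𝕀 ((j :: L) ++ ([k] ++ (m ++ R))))
      (orL 𝕀 ([k, j] ++ (L ++ (m ++ R)))) := by
    refine swap_block h𝕀 (j :: L) [k] ?_ [] (m ++ R) gB
    intro a ha b hb
    simp [hL] at ha hb
    omega
  have BD : leP n 𝕀 (orL 𝕀 ((j :: L) ++ ([k] ++ (m ++ R))))
      (orL 𝕀 (R ++ ([j] ++ (L ++ (k :: m))))) := by
    have := swap_block h𝕀 (j :: L ++ k :: m) R (by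
      intro a ha b hb
      simp [hL, hm, hR] at ha hb
      omega) [] [] (by simpa using gB)
    simpa using this
  have AD1 : leP n 𝕀 (orL 𝕀 (L ++ ([k, j] ++ (m ++ R)))) (orL 𝕀 (R ++ (L ++ (k :: j :: m)))) := by
    have := swap_block h𝕀 (L ++ k :: j :: m) R (by
      intro a ha b hb
      simp [hL, hm, hR] at ha hb
      omega) [] [] (by simpa using gA)
    simpa using this
  have AD2 : orL 𝕀 (R ++ (L ++ (k :: j :: m))) = orL 𝕀 (R ++ (L ++ ([j] ++ (k :: m)))) := by
    funext H
    simp only [orL]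
    by_cases h1 : ∃ x ∈ R, x ∈ H.1
    · rw [fst_left h1, fst_left h1]
    rw [fst_right h1, fst_right h1]
    by_cases h2 : ∃ x ∈ L, x ∈ H.1
    · rw [fst_left h2, fst_left h2]
    rw [fst_right h2, fst_right h2]
    simp only [List.cons_append, List.nil_append, fst]
    by_cases hk : k ∈ H.1 <;> by_cases hj : j ∈ H.1 <;> simp [hk, hj]
    exfalso
    apply hM
    obtain ⟨p, q, h3, h4, h5, e⟩ := h𝕀.1 H.1 H.2
    have hH := H.2
    simp only [e, Finset.mem_Icc, hL, hR] at *
    have e1 : p = j := by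
      by_contra hp
      exact h2 ⟨p, by omega, by omega⟩
    have e2 : q = k := by
      by_contra hp
      exact h1 ⟨q, by omega, by omega⟩
    rwa [e1, e2] at hH
  have AD3 := swap_block h𝕀 L [j] (by
      intro a ha b hb
      simp [hL] at ha hb
      omega) R (k :: m) gD'
  have AD := AD1.trans (AD2 ▸ AD3)
  obtain ⟨⟨x1, x2, x3, x4⟩, -⟩ := hlat _ _ (orL_acyc h𝕀 gA) (orL_acyc h𝕀 gB)
  have xC := x4 _ (orL_acyc h𝕀 gC) AC BC
  have xD := x4 _ (orL_acyc h𝕀 gD) AD BD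
  generalize join (orL 𝕀 (L ++ ([k, j] ++ (m ++ R)))) (orL 𝕀 ((j :: L) ++ ([k] ++ (m ++ R)))) = X
    at *
  have a1 := leP_le x2 ⟨_, hJ⟩
  have a2 := leP_le x3 ⟨_, hI⟩
  have a3 := leP_le xC ⟨_, hJ⟩
  have a4 := leP_le xD ⟨_, hI⟩
  simp only [orL] at a1 a2 a3 a4
  rw [fst_right (by simp [hL]; omega), List.cons_append, fst_cons_mem (by simp; omega)] at a1
  rw [List.cons_append, fst_cons_mem (by simp; omega)] at a2
  rw [List.cons_append, fst_cons_mem (by simp; omega)] at a3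
  rw [fst_right (by simp [hR]; omega), List.cons_append, fst_cons_mem (by simp; omega)] at a4
  have := no_two_cycle x1.2 ⟨_, hI⟩ ⟨_, hJ⟩ (by simp; omega) (by simp; omega)
  omega

theorem init_final {n : ℕ} {𝕀 : Finset (Finset ℕ)} (h𝕀 : IsIntervalHypergraph n 𝕀)
    {join meet : (Edge 𝕀 → ℕ) → (Edge 𝕀 → ℕ) → Edge 𝕀 → ℕ} (hlat : IsLattice n 𝕀 join meet)
    (hdis : ∀ A B C, AcycOr 𝕀 A → AcycOr 𝕀 B → AcycOr 𝕀 C →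
        join A (meet B C) = meet (join A B) (join A C))
    {i j k l p q : ℕ} (hi : 1 ≤ i) (hij : i < j) (hjk : j ≤ k) (hkl : k < l) (hl : l ≤ n)
    (hI : Finset.Icc i k ∈ 𝕀) (hJ : Finset.Icc j l ∈ 𝕀) (hK : Finset.Icc p q ∈ 𝕀)
    (hp : p < j) (hq : k < q) : False := by
  obtain ⟨L, hL, hLn, L', hL'⟩ : ∃ L : List ℕ, (∀ x, x ∈ L ↔ 1 ≤ x ∧ x < j) ∧ L.Nodup ∧
      ∃ L', L = (j - 1) :: L' :=
    ⟨(j - 1) :: (Finset.Ico 1 (j - 1)).toList, by intro x; simp; omega,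
      List.nodup_cons.2 ⟨by simp, Finset.nodup_toList _⟩, _, rfl⟩
  obtain ⟨M, hM, hMn⟩ : ∃ L : List ℕ, (∀ x, x ∈ L ↔ j ≤ x ∧ x ≤ k) ∧ L.Nodup :=
    ⟨(Finset.Icc j k).toList, by simp, Finset.nodup_toList _⟩
  obtain ⟨R, hR, hRn, R', hR'⟩ : ∃ L : List ℕ, (∀ x, x ∈ L ↔ k < x ∧ x ≤ n) ∧ L.Nodup ∧
      ∃ L', L = (k + 1) :: L' :=
    ⟨(k + 1) :: (Finset.Ioc (k + 1) n).toList, by intro x; simp; omega,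
      List.nodup_cons.2 ⟨by simp, Finset.nodup_toList _⟩, _, rfl⟩
  have fL : ∀ H : Finset ℕ, j - 1 ∈ H → fst L H = j - 1 := by
    intro H h; rw [hL', fst_cons_mem h]
  have fR : ∀ H : Finset ℕ, k + 1 ∈ H → fst R H = k + 1 := by
    intro H h; rw [hR', fst_cons_mem h]
  clear hL' hR'
  have LM : ∀ a ∈ L, ∀ b ∈ M, a < b := by
    intro a ha b hb; rw [hL] at ha; rw [hM] at hb; omega
  have LR : ∀ a ∈ L, ∀ b ∈ R, a < b := by
    intro a ha b hb; rw [hL] at ha; rw [hR] at hb; omega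
  have MR : ∀ a ∈ M, ∀ b ∈ R, a < b := by
    intro a ha b hb; rw [hM] at ha; rw [hR] at hb; omega
  have gb : Good n (L ++ (M ++ R)) := by
    constructor
    · simp only [List.nodup_append, List.mem_append, hL, hM, hR, hLn, hMn, hRn]
      simp
      refine ⟨?_, ?_⟩ <;> intros <;> omega
    · intro x
      simp only [List.mem_append, hL, hM, hR]
      omega
  have gy : Good n (L ++ (R ++ M)) := gb.perm (by
    rw [List.perm_iff_count]; intro a; simp; omega)
  have gx : Good n (R ++ (L ++ M)) := gb.perm (by
    rw [List.perm_iff_count]; intro a; simp; omega)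
  have gT : Good n (R ++ (M ++ L)) := gb.perm (by
    rw [List.perm_iff_count]; intro a; simp; omega)
  have gz : Good n (M ++ (L ++ R)) := gb.perm (by
    rw [List.perm_iff_count]; intro a; simp; omega)
  have gz' : Good n (M ++ (R ++ L)) := gb.perm (by
    rw [List.perm_iff_count]; intro a; simp; omega)
  have by' : leP n 𝕀 (orL 𝕀 (L ++ (M ++ R))) (orL 𝕀 (L ++ (R ++ M))) := by
    simpa using swap_block h𝕀 M R MR L [] (by simpa using gb)
  have yx : leP n 𝕀 (orL 𝕀 (L ++ (R ++ M))) (orL 𝕀 (R ++ (L ++ M))) := by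
    simpa using swap_block h𝕀 L R LR [] M (by simpa using gy)
  have xT : leP n 𝕀 (orL 𝕀 (R ++ (L ++ M))) (orL 𝕀 (R ++ (M ++ L))) := by
    simpa using swap_block h𝕀 L M LM R [] (by simpa using gx)
  have bz : leP n 𝕀 (orL 𝕀 (L ++ (M ++ R))) (orL 𝕀 (M ++ (L ++ R))) := by
    simpa using swap_block h𝕀 L M LM [] R (by simpa using gb)
  have zT' : leP n 𝕀 (orL 𝕀 (M ++ (R ++ L))) (orL 𝕀 (R ++ (M ++ L))) := by
    simpa using swap_block h𝕀 M R MR [] L (by simpa using gz')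
  have conv : ∀ H : Edge 𝕀, (∃ x ∈ L, x ∈ H.1) → (∃ x ∈ R, x ∈ H.1) →
      ∀ x, j - 1 ≤ x → x ≤ k + 1 → x ∈ H.1 := by
    rintro H ⟨x, hx, hx'⟩ ⟨y, hy, hy'⟩ z h1 h2
    obtain ⟨p, q, h3, h4, h5, e⟩ := h𝕀.1 H.1 H.2
    simp only [e, Finset.mem_Icc, hL, hR] at *
    omega
  have hMne : ∃ x ∈ M, True := ⟨j, by rw [hM]; omega, trivial⟩
  have zz : orL 𝕀 (M ++ (L ++ R)) = orL 𝕀 (M ++ (R ++ L)) := by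
    funext H
    simp only [orL]
    by_cases h1 : ∃ x ∈ M, x ∈ H.1
    · rw [fst_left h1, fst_left h1]
    rw [fst_right h1, fst_right h1]
    by_cases h2 : ∃ x ∈ L, x ∈ H.1
    · by_cases h3 : ∃ x ∈ R, x ∈ H.1
      · exact absurd ⟨j, by rw [hM]; omega, conv H h2 h3 j (by omega) (by omega)⟩ h1
      · rw [fst_left h2, fst_right h3]
    · rw [fst_right h2]
      by_cases h3 : ∃ x ∈ R, x ∈ H.1
      · rw [fst_left h3]
      · rw [fst_right h3]
        have e1 := fst_right (v := []) h2
        have e2 := fst_right (v := []) h3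
        simp at e1 e2
        rw [e1, e2]
  have zT : leP n 𝕀 (orL 𝕀 (M ++ (L ++ R))) (orL 𝕀 (R ++ (M ++ L))) := by rw [zz]; exact zT'
  have ay := orL_acyc h𝕀 gy
  have ax := orL_acyc h𝕀 gx
  have az := orL_acyc h𝕀 gz
  have aT := orL_acyc h𝕀 gT
  have ab := orL_acyc h𝕀 gb
  -- the join of y and z is T
  have hjoin : join (orL 𝕀 (L ++ (R ++ M))) (orL 𝕀 (M ++ (L ++ R))) = orL 𝕀 (R ++ (M ++ L)) := by
    obtain ⟨⟨d1, d2, d3, d4⟩, -⟩ := hlat _ _ ay az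
    have d5 := d4 _ aT (yx.trans xT) zT
    generalize join (orL 𝕀 (L ++ (R ++ M))) (orL 𝕀 (M ++ (L ++ R))) = D at *
    have mr : ∀ H : Edge 𝕀, (∃ x ∈ R, x ∈ H.1) → (¬ ∃ x ∈ L, x ∈ H.1) → D H = fst R H.1 := by
      intro H h1 h2
      apply le_antisymm
      · have := leP_le d5 H
        simp only [orL] at this
        rwa [fst_left h1] at this
      · have := leP_le d2 H
        simp only [orL] at this
        rwa [fst_right h2, fst_left h1] at this
    funext H
    have u1 := leP_le d2 H
    have u2 := leP_le d3 H
    have u3 := leP_le d5 H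
    simp only [orL] at u1 u2 u3 ⊢
    by_cases h1 : ∃ x ∈ R, x ∈ H.1
    · rw [fst_left h1] at u3 ⊢
      by_cases h2 : ∃ x ∈ L, x ∈ H.1
      · have hc := conv H h2 h1
        have h3 : ∃ x ∈ M, x ∈ H.1 := ⟨j, by rw [hM]; omega, hc j (by omega) (by omega)⟩
        rw [fst_left h3] at u2
        have h4 := (hM _).1 (fst_mem h3).1
        rw [fR _ (hc (k + 1) (by omega) (by omega))] at u3 ⊢
        by_contra hne
        have hDJ : D ⟨_, hJ⟩ = k + 1 := by
          rw [mr ⟨_, hJ⟩ ⟨k + 1, by rw [hR]; omega, by simp; omega⟩ (by simp [hL]; omega)]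
          exact fR _ (by simp; omega)
        have := no_two_cycle d1.2 ⟨_, hJ⟩ H (by simp; omega)
          (by rw [hDJ]; exact hc _ (by omega) (by omega))
        omega
      · exact mr H h1 h2
    · rw [fst_right h1] at u3 ⊢
      by_cases h3 : ∃ x ∈ M, x ∈ H.1
      · rw [fst_left h3] at u2 u3 ⊢
        omega
      · rw [fst_right h3] at u2 u3 ⊢
        by_cases h2 : ∃ x ∈ L, x ∈ H.1
        · rw [fst_left h2] at u2
          omega
        · rw [fst_right h2, fst_right h1] at u1
          exfalso
          have := d1.1 H
          obtain ⟨p, q, h3', h4, h5, e⟩ := h𝕀.1 H.1 H.2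
          have hx := (gb.2 p).2 (by omega)
          have hx' : p ∈ H.1 := by rw [e]; simp [h4]
          simp only [List.mem_append] at hx
          rcases hx with hx | hx | hx
          · exact h2 ⟨p, hx, hx'⟩
          · exact h3 ⟨p, hx, hx'⟩
          · exact h1 ⟨p, hx, hx'⟩
  have hmeet : meet (orL 𝕀 (R ++ (L ++ M))) (orL 𝕀 (M ++ (L ++ R))) = orL 𝕀 (L ++ (M ++ R)) := by
    obtain ⟨-, ⟨d1, d2, d3, d4⟩⟩ := hlat _ _ ax az
    have d5 := d4 _ ab (by'.trans yx) bz
    generalize meet (orL 𝕀 (R ++ (L ++ M))) (orL 𝕀 (M ++ (L ++ R))) = D at *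
    have ml : ∀ H : Edge 𝕀, (∃ x ∈ L, x ∈ H.1) → (¬ ∃ x ∈ R, x ∈ H.1) → D H = fst L H.1 := by
      intro H h1 h2
      apply le_antisymm
      · have := leP_le d2 H
        simp only [orL] at this
        rwa [fst_right h2, fst_left h1] at this
      · have := leP_le d5 H
        simp only [orL] at this
        rwa [fst_left h1] at this
    rw [zz] at d3
    funext H
    have u2 := leP_le d3 H
    have u3 := leP_le d5 H
    simp only [orL] at u2 u3 ⊢
    by_cases h1 : ∃ x ∈ L, x ∈ H.1
    · rw [fst_left h1] at u3 ⊢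
      by_cases h2 : ∃ x ∈ R, x ∈ H.1
      · have hc := conv H h1 h2
        have h3 : ∃ x ∈ M, x ∈ H.1 := ⟨j, by rw [hM]; omega, hc j (by omega) (by omega)⟩
        rw [fst_left h3] at u2
        have h4 := (hM _).1 (fst_mem h3).1
        rw [fL _ (hc (j - 1) (by omega) (by omega))] at u3 ⊢
        by_contra hne
        have hDI : D ⟨_, hI⟩ = j - 1 := by
          rw [ml ⟨_, hI⟩ ⟨j - 1, by rw [hL]; omega, by simp; omega⟩ (by simp [hR]; omega)]
          exact fL _ (by simp; omega)
        have := no_two_cycle d1.2 ⟨_, hI⟩ H (by simp; omega)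
          (by rw [hDI]; exact hc _ (by omega) (by omega))
        omega
      · exact ml H h1 h2
    · rw [fst_right h1] at u3 ⊢
      by_cases h3 : ∃ x ∈ M, x ∈ H.1
      · rw [fst_left h3] at u2 u3 ⊢
        omega
      · rw [fst_right h3] at u2 u3 ⊢
        by_cases h2 : ∃ x ∈ R, x ∈ H.1
        · rw [fst_left h2] at u2
          omega
        · exfalso
          obtain ⟨p, q, h3', h4, h5, e⟩ := h𝕀.1 H.1 H.2
          have hx := (gb.2 p).2 (by omega)
          have hx' : p ∈ H.1 := by rw [e]; simp [h4]
          simp only [List.mem_append] at hx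
          rcases hx with hx | hx | hx
          · exact h1 ⟨p, hx, hx'⟩
          · exact h3 ⟨p, hx, hx'⟩
          · exact h2 ⟨p, hx, hx'⟩
  have hd := hdis _ _ _ ay ax az
  rw [hjoin, hmeet] at hd
  obtain ⟨⟨a1, a2, a3, a4⟩, -⟩ := hlat _ _ ay ab
  have c1 := a4 _ ay Relation.ReflTransGen.refl by'
  obtain ⟨⟨b1, b2, b3, b4⟩, -⟩ := hlat _ _ ay ax
  obtain ⟨-, ⟨e1, e2, e3, e4⟩⟩ := hlat _ _ b1 aT
  have c2 := e4 _ ax b3 xT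
  rw [← hd] at c2
  have c3 := leP_le (c2.trans c1) ⟨_, hK⟩
  simp only [orL] at c3
  obtain ⟨p', q', w1, w2, w3, e⟩ := h𝕀.1 _ hK
  have hpq : p ≤ q := by omega
  have hq' : q ∈ Finset.Icc p' q' := by rw [← e]; simp [hpq]
  have hp' : p ∈ Finset.Icc p' q' := by rw [← e]; simp [hpq]
  simp only [Finset.mem_Icc] at hq' hp'
  have hcR : ∃ x ∈ R, x ∈ Finset.Icc p q := ⟨q, by rw [hR]; omega, by simp [hpq]⟩
  have hcL : ∃ x ∈ L, x ∈ Finset.Icc p q := ⟨p, by rw [hL]; omega, by simp [hpq]⟩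
  rw [fst_left hcR, fst_left hcL] at c3
  have := LR _ (fst_mem hcL).1 _ (fst_mem hcR).1
  omega

theorem forward (n : ℕ) (𝕀 : Finset (Finset ℕ))
    (h𝕀 : IsIntervalHypergraph n 𝕀)
    (join meet : (Edge 𝕀 → ℕ) → (Edge 𝕀 → ℕ) → Edge 𝕀 → ℕ) (hlat : IsLattice n 𝕀 join meet)
    (hdis : ∀ A B C, AcycOr 𝕀 A → AcycOr 𝕀 B → AcycOr 𝕀 C →
        join A (meet B C) = meet (join A B) (join A C)) : IsDistribHG 𝕀 := by
  have main : ∀ i j k l, 1 ≤ i → i < j → j ≤ k → k < l → l ≤ n → Finset.Icc i k ∈ 𝕀 →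
      Finset.Icc j l ∈ 𝕀 → (Finset.Icc j k ∈ 𝕀 ∧ ∀ K ∈ 𝕀, Finset.Icc j k ⊆ K →
        ((Finset.Icc j k).min = K.min ∨ (Finset.Icc j k).max = K.max)) := by
    intro i j k l hi hij hjk hkl hl hI hJ
    refine ⟨inter_mem h𝕀 hlat hi hij hjk hkl hl hI hJ, ?_⟩
    intro K hK hsub
    obtain ⟨p, q, h1, h2, h3, rfl⟩ := h𝕀.1 K hK
    rw [Finset.Icc_subset_Icc_iff hjk] at hsub
    rw [icc_min hjk, icc_max hjk, icc_min h2, icc_max h2]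
    by_contra hcon
    push Not at hcon
    have c1 : j ≠ p := fun h => hcon.1 (by rw [h])
    have c2 : k ≠ q := fun h => hcon.2 (by rw [h])
    exact init_final h𝕀 hlat hdis hi hij hjk hkl hl hI hJ hK (by omega) (by omega)
  intro I hI J hJ h1 h2 hne
  obtain ⟨a, b, a1, hab, b1, rfl⟩ := h𝕀.1 I hI
  obtain ⟨c, d, c1, hcd, d1, rfl⟩ := h𝕀.1 J hJ
  rw [icc_inter] at hne ⊢
  rw [Finset.nonempty_Icc] at hne
  rw [Finset.Icc_subset_Icc_iff hab] at h1
  rw [Finset.Icc_subset_Icc_iff hcd] at h2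
  by_cases hac : a < c
  · rw [max_eq_right hac.le, min_eq_left (by omega)]
    exact main a c b d a1 hac (by omega) (by omega) d1 hI hJ
  · rw [max_eq_left (by omega), min_eq_right (by omega)]
    exact main c a d b c1 (by omega) (by omega) (by omega) b1 hJ hI

/-- For an interval hypergraph `𝕀` on `[n]`, the hypergraphic poset
`P_𝕀` is a distributive lattice if and only if for all `I, J ∈ 𝕀` with `I ⊈ J`, `J ⊈ I`
and `I ∩ J ≠ ∅`, the intersection `I ∩ J` belongs to `𝕀` and is initial or final in
every `K ∈ 𝕀` containing it. -/
theorem stmt1 (n : ℕ) (hn : 1 ≤ n) (𝕀 : Finset (Finset ℕ))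
    (h𝕀 : IsIntervalHypergraph n 𝕀) :
    (∃ join meet : (Edge 𝕀 → ℕ) → (Edge 𝕀 → ℕ) → Edge 𝕀 → ℕ,
      (∀ A B, AcycOr 𝕀 A → AcycOr 𝕀 B →
        (AcycOr 𝕀 (join A B) ∧ leP n 𝕀 A (join A B) ∧ leP n 𝕀 B (join A B) ∧
          ∀ D, AcycOr 𝕀 D → leP n 𝕀 A D → leP n 𝕀 B D → leP n 𝕀 (join A B) D) ∧
        (AcycOr 𝕀 (meet A B) ∧ leP n 𝕀 (meet A B) A ∧ leP n 𝕀 (meet A B) B ∧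
          ∀ D, AcycOr 𝕀 D → leP n 𝕀 D A → leP n 𝕀 D B → leP n 𝕀 D (meet A B))) ∧
      ∀ A B C, AcycOr 𝕀 A → AcycOr 𝕀 B → AcycOr 𝕀 C →
        join A (meet B C) = meet (join A B) (join A C)) ↔
    IsDistribHG 𝕀 := by
  constructor
  · rintro ⟨join, meet, h1, h2⟩
    exact forward n 𝕀 h𝕀 join meet h1 h2
  · exact backward n 𝕀 h𝕀
end IHL
end

section
/- Let 𝕀 be an interval hypergraph on [n] and A an acyclic orientation of 𝕀. Then the fiber Or⁻¹(A) = {π : Or_π = A} is a nonempty interval [σ, τ] of the weak order on permutations of [n] (i.e., there exist σ, τ ∈ Or⁻¹(A) with Or⁻¹(A) = {π : σ ≤ π ≤ τ in the weak order}), whose minimum σ avoids the pattern 231 and whose maximum τ avoids the pattern 213. -/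
namespace IHL

theorem exists_perm (n : ℕ) (L : ℕ → ℕ → Prop) (hirr : ∀ x, ¬ L x x)
    (htr : ∀ x y z, L x y → L y z → L x z) (htot : ∀ x y, x ≠ y → L x y ∨ L y x) :
    ∃ π : Equiv.Perm ℕ, IsPermOn n π ∧
      ∀ a b, a ∈ Finset.Icc 1 n → b ∈ Finset.Icc 1 n → (π.symm a < π.symm b ↔ L a b) := by
  classical
  let g : ℕ → ℕ := fun x => ((Finset.Icc 1 n).filter (fun y => L y x)).card + 1
  have hmono : ∀ a b, a ∈ Finset.Icc 1 n → L a b → g a < g b := by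
    intro a b ha hab
    have : ((Finset.Icc 1 n).filter (fun y => L y a)).card
        < ((Finset.Icc 1 n).filter (fun y => L y b)).card := by
      apply Finset.card_lt_card
      rw [Finset.ssubset_iff_of_subset]
      · exact ⟨a, by simp only [Finset.mem_filter]; exact ⟨ha, hab⟩,
          by simp only [Finset.mem_filter]; exact fun h => hirr a h.2⟩
      · intro y hy
        simp only [Finset.mem_filter] at hy ⊢
        exact ⟨hy.1, htr _ _ _ hy.2 hab⟩
    show _ + 1 < _ + 1
    omega
  have hiff : ∀ a b, a ∈ Finset.Icc 1 n → b ∈ Finset.Icc 1 n → (g a < g b ↔ L a b) := by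
    intro a b ha hb
    refine ⟨fun h => ?_, hmono a b ha⟩
    by_contra hL
    by_cases hab : a = b
    · subst hab; exact lt_irrefl _ h
    · have := hmono b a hb ((htot a b hab).resolve_left hL)
      omega
  have hginj : ∀ a b, a ∈ Finset.Icc 1 n → b ∈ Finset.Icc 1 n → g a = g b → a = b := by
    intro a b ha hb h
    by_contra hab
    rcases htot a b hab with h1 | h1
    · have := hmono a b ha h1; omega
    · have := hmono b a hb h1; omega
  have hgmem : ∀ a, a ∈ Finset.Icc 1 n → g a ∈ Finset.Icc 1 n := by
    intro a ha
    have : ((Finset.Icc 1 n).filter (fun y => L y a)).card < (Finset.Icc 1 n).card := by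
      apply Finset.card_lt_card
      rw [Finset.ssubset_iff_of_subset (Finset.filter_subset _ _)]
      exact ⟨a, ha, by simp only [Finset.mem_filter]; exact fun h => hirr a h.2⟩
    rw [Nat.card_Icc] at this
    show _ + 1 ∈ _
    rw [Finset.mem_Icc]
    omega
  have hgim : (Finset.Icc 1 n).image g = Finset.Icc 1 n := by
    apply Finset.eq_of_subset_of_card_le
    · intro y hy
      obtain ⟨x, hx, rfl⟩ := Finset.mem_image.1 hy
      exact hgmem x hx
    · rw [Finset.card_image_of_injOn]
      intro a ha b hb h
      exact hginj a b ha hb h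
  let f : ℕ → ℕ := fun x => if x ∈ Finset.Icc 1 n then g x else x
  have hf1 : ∀ x, x ∈ Finset.Icc 1 n → f x = g x := fun x hx => if_pos hx
  have hf2 : ∀ x, x ∉ Finset.Icc 1 n → f x = x := fun x hx => if_neg hx
  have hbij : Function.Bijective f := by
    constructor
    · intro a b h
      by_cases ha : a ∈ Finset.Icc 1 n <;> by_cases hb : b ∈ Finset.Icc 1 n
      · rw [hf1 a ha, hf1 b hb] at h; exact hginj a b ha hb h
      · rw [hf1 a ha, hf2 b hb] at h; exact absurd (h ▸ hgmem a ha) hb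
      · rw [hf2 a ha, hf1 b hb] at h; exact absurd (h ▸ hgmem b hb) ha
      · rwa [hf2 a ha, hf2 b hb] at h
    · intro y
      by_cases hy : y ∈ Finset.Icc 1 n
      · have hy' := hy
        rw [← hgim] at hy'
        obtain ⟨x, hx, rfl⟩ := Finset.mem_image.1 hy'
        exact ⟨x, hf1 x hx⟩
      · exact ⟨y, hf2 y hy⟩
  refine ⟨(Equiv.ofBijective f hbij).symm, ?_, ?_⟩
  · intro x hx
    rw [Equiv.symm_apply_eq]
    exact (hf2 x hx).symm
  · intro a b ha hb
    show f a < f b ↔ _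
    rw [hf1 a ha, hf1 b hb]
    exact hiff a b ha hb

theorem prec_path (𝕀 : Finset (Finset ℕ)) (A : Edge 𝕀 → ℕ) (K : Edge 𝕀) (a : ℕ)
    (h : prec 𝕀 A a (A K)) : ∃ (k : ℕ) (H : ℕ → Edge 𝕀), 1 ≤ k ∧ A (H 0) = a ∧ H k = K ∧
      ∀ p < k, A (H (p + 1)) ∈ (H p).1 ∧ A (H (p + 1)) ≠ A (H p) := by
  unfold prec at h
  induction h using Relation.TransGen.head_induction_on with
  | single h =>
    obtain ⟨H0, rfl, h2, h3⟩ := h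
    refine ⟨1, fun p => if p = 0 then H0 else K, le_rfl, by simp, by simp, ?_⟩
    intro p hp
    obtain rfl : p = 0 := by omega
    simpa using ⟨h2, h3⟩
  | head h _ ih =>
    obtain ⟨H0, rfl, h2, h3⟩ := h
    obtain ⟨k, H, hk, h0, hK, hs⟩ := ih
    refine ⟨k + 1, fun p => if p = 0 then H0 else H (p - 1), by omega, by simp,
      by simpa using hK, ?_⟩
    intro p hp
    rcases p with _ | p
    · simp only [h0, zero_add, one_ne_zero, if_false, if_true, Nat.sub_self]
      exact ⟨h2, h3⟩
    · simpa using hs p (by omega)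

theorem prec_irrefl (𝕀 : Finset (Finset ℕ)) (A : Edge 𝕀 → ℕ) (hA : IsAcyclic 𝕀 A) (a : ℕ) :
    ¬ prec 𝕀 A a a := by
  intro h
  have hK : ∃ K : Edge 𝕀, A K = a := by
    obtain ⟨c, ⟨H, h1, _⟩, _⟩ := (Relation.TransGen.head'_iff).1 h
    exact ⟨H, h1⟩
  obtain ⟨K, rfl⟩ := hK
  obtain ⟨k, H, hk, h0, hK, hs⟩ := prec_path 𝕀 A K _ h
  have hk2 : 2 ≤ k := by
    by_contra hlt
    obtain rfl : k = 1 := by omega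
    have := (hs 0 (by omega)).2
    simp [hK, h0] at this
  apply hA
  refine ⟨k, fun p => if p = k then H 0 else H p, hk2, by simp, ?_⟩
  intro p hp
  have h1 : A (if p + 1 = k then H 0 else H (p + 1)) = A (H (p + 1)) := by
    split_ifs with h
    · rw [h0, h, hK]
    · rfl
  have h2 : (if p = k then H 0 else H p) = H p := if_neg (by omega)
  simp only [h1, h2]
  exact hs p hp

theorem prec_mem (n : ℕ) (𝕀 : Finset (Finset ℕ)) (h𝕀 : IsIntervalHypergraph n 𝕀)
    (A : Edge 𝕀 → ℕ) (hA : IsOrientation 𝕀 A) (a b : ℕ) (h : prec 𝕀 A a b) :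
    a ∈ Finset.Icc 1 n ∧ b ∈ Finset.Icc 1 n := by
  have key : ∀ (H : Edge 𝕀) x, x ∈ H.1 → x ∈ Finset.Icc 1 n := by
    intro H x hx
    obtain ⟨c, d, h1, h2, h3, h4⟩ := h𝕀.1 H.1 H.2
    rw [h4] at hx
    rw [Finset.mem_Icc] at hx ⊢
    omega
  unfold prec at h
  induction h with
  | single h =>
    obtain ⟨H, rfl, h2, h3⟩ := h
    exact ⟨key H _ (hA H), key H _ h2⟩
  | tail _ h ih =>
    obtain ⟨H, rfl, h2, h3⟩ := h
    exact ⟨ih.1, key H _ h2⟩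

theorem prec_between (n : ℕ) (𝕀 : Finset (Finset ℕ)) (h𝕀 : IsIntervalHypergraph n 𝕀)
    (A : Edge 𝕀 → ℕ) (hA : IsOrientation 𝕀 A) (a b c : ℕ) (h : prec 𝕀 A a b)
    (hc : (a < c ∧ c < b) ∨ (b < c ∧ c < a)) : prec 𝕀 A a c := by
  have key : ∀ (H : Edge 𝕀) x y z, x ∈ H.1 → y ∈ H.1 → x ≤ z → z ≤ y → z ∈ H.1 := by
    intro H x y z hx hy h1 h2
    obtain ⟨c, d, _, _, _, h4⟩ := h𝕀.1 H.1 H.2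
    rw [h4, Finset.mem_Icc] at hx hy ⊢
    omega
  unfold prec at h ⊢
  induction h with
  | single h =>
    obtain ⟨H, rfl, h2, h3⟩ := h
    refine Relation.TransGen.single ⟨H, rfl, ?_, by omega⟩
    rcases hc with hc | hc
    · exact key H _ _ _ (hA H) h2 (by omega) (by omega)
    · exact key H _ _ _ h2 (hA H) (by omega) (by omega)
  | @tail x y hax h ih =>
    obtain ⟨H, rfl, h2, h3⟩ := h
    by_cases hx : (a < c ∧ c < A H) ∨ (A H < c ∧ c < a)
    · exact ih hx
    · by_cases hxc : A H = c
      · rw [← hxc]; exact hax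
      · refine Relation.TransGen.tail hax ⟨H, rfl, ?_, fun h => hxc h.symm⟩
        rcases hc with hc | hc
        · exact key H _ _ _ (hA H) h2 (by omega) (by omega)
        · exact key H _ _ _ h2 (hA H) (by omega) (by omega)

theorem fiber_iff (n : ℕ) (𝕀 : Finset (Finset ℕ)) (h𝕀 : IsIntervalHypergraph n 𝕀)
    (A : Edge 𝕀 → ℕ) (hA : IsOrientation 𝕀 A) (π : Equiv.Perm ℕ) :
    orMap 𝕀 π = A ↔ ∀ a b, prec 𝕀 A a b → π.symm a < π.symm b := by
  constructor
  · intro h a b hab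
    unfold prec at hab
    have step : ∀ a b, (∃ H : Edge 𝕀, A H = a ∧ b ∈ H.1 ∧ b ≠ a) → π.symm a < π.symm b := by
      rintro a b ⟨H, rfl, h2, h3⟩
      have h4 : A H = π (sInf {p | π p ∈ H.1}) := by rw [← h]; rfl
      have h5 : π.symm (A H) ≤ π.symm b := by
        rw [h4, Equiv.symm_apply_apply]
        apply Nat.sInf_le
        simpa using h2
      exact lt_of_le_of_ne h5 (fun h => h3 (π.symm.injective h).symm)
    induction hab with
    | single h => exact step _ _ h
    | tail _ h ih => exact ih.trans (step _ _ h)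
  · intro h
    funext H
    have : sInf {p | π p ∈ H.1} = π.symm (A H) := by
      apply IsLeast.csInf_eq
      constructor
      · simpa using hA H
      · intro p hp
        by_cases hpA : π p = A H
        · rw [← hpA]; simp
        · have := h (A H) (π p) (Relation.TransGen.single ⟨H, rfl, hp, hpA⟩)
          rw [Equiv.symm_apply_apply] at this
          exact this.le
    show π (sInf {p | π p ∈ H.1}) = A H
    rw [this, Equiv.apply_symm_apply]

theorem perm_mem {n : ℕ} {π : Equiv.Perm ℕ} (h : IsPermOn n π) {p : ℕ} (h1 : 1 ≤ p)
    (h2 : p ≤ n) : π p ∈ Finset.Icc 1 n := by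
  by_contra hc
  have := π.injective (h _ hc)
  rw [this] at hc
  exact hc (Finset.mem_Icc.2 ⟨h1, h2⟩)

/-- The fiber `Or⁻¹(A)` of an acyclic orientation `A` of an interval
hypergraph is a nonempty interval `[σ, τ]` of the weak order, whose minimum `σ` avoids
the pattern 231 and whose maximum `τ` avoids the pattern 213. -/
theorem stmt7 (n : ℕ) (hn : 1 ≤ n) (𝕀 : Finset (Finset ℕ))
    (h𝕀 : IsIntervalHypergraph n 𝕀) (A : Edge 𝕀 → ℕ) (hA : AcycOr 𝕀 A) :
    ∃ σ τ : Equiv.Perm ℕ, IsPermOn n σ ∧ IsPermOn n τ ∧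
      orMap 𝕀 σ = A ∧ orMap 𝕀 τ = A ∧
      (∀ π, IsPermOn n π → (orMap 𝕀 π = A ↔ weakLe n σ π ∧ weakLe n π τ)) ∧
      ¬Contains231 n σ ∧ ¬Contains213 n τ := by
  obtain ⟨hO, hac⟩ := hA
  have irr := prec_irrefl 𝕀 A hac
  have btw := prec_between n 𝕀 h𝕀 A hO
  have mem := prec_mem n 𝕀 h𝕀 A hO
  have fib := fiber_iff n 𝕀 h𝕀 A hO
  have tr : ∀ x y z, prec 𝕀 A x y → prec 𝕀 A y z → prec 𝕀 A x z :=
    fun x y z h1 h2 => Relation.TransGen.trans h1 h2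
  generalize prec 𝕀 A = P at *
  obtain ⟨σ, hσ, hσL⟩ := exists_perm n (fun x y => (x < y ∧ ¬ P y x) ∨ (y < x ∧ P x y))
    (by intro x; simp) (by
      intro x y z h1 h2
      have := irr x
      have := irr y
      have := irr z
      rcases lt_trichotomy x z with h | h | h
      · grind
      · subst h; grind
      · grind) (by intro x y hxy; by_cases P x y <;> by_cases P y x <;> grind)
  obtain ⟨τ, hτ, hτL⟩ := exists_perm n (fun x y => (x < y ∧ P x y) ∨ (y < x ∧ ¬ P y x))
    (by intro x; simp) (by
      intro x y z h1 h2
      have := irr x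
      have := irr y
      have := irr z
      rcases lt_trichotomy x z with h | h | h
      · grind
      · subst h; grind
      · grind) (by intro x y hxy; by_cases P x y <;> by_cases P y x <;> grind)
  have asym : ∀ x y, P x y → ¬ P y x := fun x y h1 h2 => irr x (tr _ _ _ h1 h2)
  refine ⟨σ, τ, hσ, hτ, ?_, ?_, ?_, ?_, ?_⟩
  · rw [fib]
    intro a b hab
    rw [hσL a b (mem a b hab).1 (mem a b hab).2]
    have := irr a
    have := asym a b hab
    grind
  · rw [fib]
    intro a b hab
    rw [hτL a b (mem a b hab).1 (mem a b hab).2]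
    have := irr a
    have := asym a b hab
    grind
  · intro π hπ
    rw [fib]
    constructor
    · intro h
      constructor
      · intro a b h1 h2 h3 h4
        rw [hσL b a (Finset.mem_Icc.2 (by omega)) (Finset.mem_Icc.2 (by omega))] at h4
        exact h b a (by grind)
      · intro a b h1 h2 h3 h4
        rw [hτL b a (Finset.mem_Icc.2 (by omega)) (Finset.mem_Icc.2 (by omega))]
        exact Or.inr ⟨h2, fun hp => absurd (h a b hp) (by omega)⟩
    · rintro ⟨h1, h2⟩ a b hab
      obtain ⟨ha, hb⟩ := mem a b hab
      have ha' := Finset.mem_Icc.1 ha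
      have hb' := Finset.mem_Icc.1 hb
      rcases lt_trichotomy a b with h | h | h
      · by_contra hlt
        have hne : π.symm a ≠ π.symm b := fun e => h.ne (π.symm.injective e)
        have h3 := h2 a b ha'.1 h hb'.2 (by omega)
        rw [hτL b a hb ha] at h3
        rcases h3 with h3 | h3
        · omega
        · exact h3.2 hab
      · subst h; exact absurd hab (irr a)
      · exact h1 b a hb'.1 h ha'.2 ((hσL a b ha hb).2 (Or.inr ⟨h, hab⟩))
  · rintro ⟨p, q, r, h1, h2, h3, h4, h5, h6⟩
    have mp := perm_mem hσ (p := p) (by omega) (by omega)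
    have mq := perm_mem hσ (p := q) (by omega) (by omega)
    have mr := perm_mem hσ (p := r) (by omega) (by omega)
    have e1 := (hσL _ _ mp mq).1 (by simpa using h2)
    have e2 := (hσL _ _ mq mr).1 (by simpa using h3)
    have := btw (σ q) (σ r) (σ p)
    grind
  · rintro ⟨p, q, r, h1, h2, h3, h4, h5, h6⟩
    have mp := perm_mem hτ (p := p) (by omega) (by omega)
    have mq := perm_mem hτ (p := q) (by omega) (by omega)
    have mr := perm_mem hτ (p := r) (by omega) (by omega)
    have e1 := (hτL _ _ mp mq).1 (by simpa using h2)
    have e2 := (hτL _ _ mq mr).1 (by simpa using h3)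
    have := btw (τ q) (τ r) (τ p)
    grind
end IHL
end
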